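/- In the semi-primitive cyclotomic setting with |T_0| = (q−1)/2 and |T_1| = (q+1)/2, define E_1 = {(x,xy) : x ∈ D_0, y ∈ A_0} ∪ {(x,xy) : x ∈ D_1, y ∈ A_1}. Then for every a ∈ F_{q²} with a ≠ 0, ψ_{a,0}(E_1) = (q²−1)/4 if a^{−1} ∈ D_ε, and ψ_{a,0}(E_1) = (−3q²−1)/4 otherwise. -/

import Mathlib

noncomputable section

def zetaP (p : ℕ) : ℂ := Complex.exp (2 * Real.pi * Complex.I / p)

/-- The canonical additive character `ψ(x) = ζ_p^{Tr_{L/F_p}(x)}`. -/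
def psiL (p : ℕ) (L : Type) [Field L] [Fintype L] [CharP L p] (x : L) : ℂ :=
  letI : Algebra (ZMod p) L := ZMod.algebra L p
  zetaP p ^ (Algebra.trace (ZMod p) L x).val

/-- `ψ_{a,b}(E) = Σ_{(x,y)∈E} ψ(ax+by)`. -/
def psiSum (p : ℕ) (L : Type) [Field L] [Fintype L] [CharP L p]
    (a b : L) (E : Set (L × L)) : ℂ :=
  ∑ᶠ z ∈ E, psiL p L (a * z.1 + b * z.2)

/-- a subset of `F_{q²} × F_{q²}` of type Q. -/
def IsTypeQ (p q : ℕ) (L : Type) [Field L] [Fintype L] [CharP L p]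
    (E : Set (L × L)) : Prop :=
  E.ncard = (q ^ 4 - 1) / 4 ∧
    ∀ a b : L, (a, b) ≠ ((0 : L), (0 : L)) →
      psiSum p L a b E = ((q : ℂ) ^ 2 - 1) / 4 ∨
      psiSum p L a b E = (-3 * (q : ℂ) ^ 2 - 1) / 4

/-- the cyclotomic class `C_i^{(N,q²)} = ω^i⟨ω^N⟩`. -/
def cyc (L : Type) [Field L] (ω : L) (N i : ℕ) : Set L :=
  {x | ∃ k : ℕ, x = ω ^ i * (ω ^ N) ^ k}

/-- ω is a primitive element (generator of the multiplicative group). -/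
def IsPrim (L : Type) [Field L] (ω : L) : Prop :=
  ∀ x : L, x ≠ 0 → ∃ n : ℕ, x = ω ^ n

/-!
Write `K = F_q`, `L = F_{q²}` and `δ = ω^{(q+1)/2}`. The elements of `K^×` are powers of
`ω^{q+1}`, and `2m ∣ q + 1`, so `D₀` and `D₁` are stable under `K^×`. Hence `Σ_{x ∈ D} ψ(ax)` does
not change when `a` is multiplied by an element of `K^×`, and averaging over these multiples leaves
a count of the `x ∈ D` with `Tr_{L/K}(ax) = 0`. The kernel of the trace is the line `Kδ`, so the sum
is `(q - 1)/2` or `-(q + 1)/2` according to whether `a⁻¹δ ∈ D`. Since `ω^m ∉ K`, the map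
`x ↦ (Tr x, Tr(xω^m))` is a bijection `L → K × K`, which gives `|A₀|` and `|A₁|`. Finally
`δ = ω^{mv}` with `v = (q + 1)/(2m)`, so multiplication by `δ` exchanges `D₀` and `D₁` exactly when
`v` is odd, and `v` is even exactly when `(p^ℓ + 1)/(2m)` is even and `t` is odd.
-/

section QuadraticTrace

theorem trace_eq_zero_of_pow_card_sub_one_eq_neg_one {K L : Type*} [Field K] [Fintype K]
    [Field L] [Algebra K L] (hKL : Module.finrank K L = 2) {δ : L}
    (hδ : δ ^ (Fintype.card K - 1) = -1) : Algebra.trace K L δ = 0 := by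
  have : FiniteDimensional K L := Module.finite_of_finrank_pos (hKL ▸ two_pos)
  have : Finite L := Module.finite_of_finite K
  have hfrob : δ ^ Fintype.card K = -δ := by
    rw [← Nat.sub_add_cancel (Fintype.card_pos (α := K)), pow_succ, hδ, neg_one_mul]
  apply (algebraMap K L).injective
  rw [FiniteField.algebraMap_trace_eq_sum_pow, hKL, Nat.card_eq_fintype_card,
    Finset.sum_range_succ, Finset.sum_range_one, pow_zero, pow_one, pow_one, hfrob, map_zero,
    add_neg_cancel]

variable {K L : Type*} [Field K] [Field L] [Algebra K L] [Algebra.IsSeparable K L]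

theorem trace_eq_zero_iff_exists_smul (hKL : Module.finrank K L = 2) {δ : L} (hδ : δ ≠ 0)
    (hδtr : Algebra.trace K L δ = 0) (x : L) :
    Algebra.trace K L x = 0 ↔ ∃ c : K, c • δ = x := by
  have : FiniteDimensional K L := Module.finite_of_finrank_pos (hKL ▸ two_pos)
  refine ⟨fun hx => ?_, ?_⟩
  · have hker : Module.finrank K (LinearMap.ker (Algebra.trace K L)) = 1 := by
      have h := LinearMap.finrank_range_add_finrank_ker (Algebra.trace K L)
      rw [LinearMap.range_eq_top.mpr (Algebra.trace_surjective K L), finrank_top,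
        Module.finrank_self, hKL] at h
      lia
    obtain ⟨c, hc⟩ := exists_smul_eq_of_finrank_eq_one hker
      (x := ⟨δ, hδtr⟩) (Subtype.coe_ne_coe.mp hδ) ⟨x, hx⟩
    exact ⟨c, congrArg Subtype.val hc⟩
  · rintro ⟨c, rfl⟩
    rw [map_smul, hδtr, smul_zero]

theorem bijective_trace_prod_trace_mul (hKL : Module.finrank K L = 2) {β : L}
    (hβ : β ∉ Set.range (algebraMap K L)) :
    Function.Bijective
      fun x : L => (Algebra.trace K L x, Algebra.trace K L (x * β)) := by
  have : FiniteDimensional K L := Module.finite_of_finrank_pos (hKL ▸ two_pos)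
  let f : L →ₗ[K] K × K :=
    (Algebra.trace K L).prod (Algebra.trace K L ∘ₗ LinearMap.mulRight K β)
  have hinj : Function.Injective f := by
    refine (injective_iff_map_eq_zero f).mpr fun x hx => by_contra fun hx0 => hβ ?_
    obtain ⟨hx1, hx2⟩ := Prod.mk_eq_zero.mp hx
    obtain ⟨c, hc⟩ := (trace_eq_zero_iff_exists_smul hKL hx0 hx1 (x * β)).mp hx2
    exact ⟨c, mul_left_cancel₀ hx0 (by rw [← hc, Algebra.smul_def, mul_comm])⟩
  exact ⟨hinj, (LinearMap.injective_iff_surjective_of_finrank_eq_finrank (by simp [hKL])).mp hinj⟩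

theorem ncard_trace_mem_and_trace_mul_mem (hKL : Module.finrank K L = 2) {β : L}
    (hβ : β ∉ Set.range (algebraMap K L)) (A B : Set K) :
    {x : L | Algebra.trace K L x ∈ A ∧ Algebra.trace K L (x * β) ∈ B}.ncard =
      A.ncard * B.ncard := by
  have hbij := bijective_trace_prod_trace_mul hKL hβ
  rw [← Set.ncard_prod,
    ← Set.ncard_preimage_of_injective_subset_range hbij.1 (hbij.2.range_eq ▸ Set.subset_univ _)]
  rfl

variable [Fintype K]

theorem ncard_trace_mem_diff (hKL : Module.finrank K L = 2) {β : L}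
    (hβ : β ∉ Set.range (algebraMap K L)) (T₀ T₁ : Set K) :
    ({x : L | Algebra.trace K L x ∈ T₀} \ {x | Algebra.trace K L (x * β) ∈ T₁}).ncard =
      T₀.ncard * (Fintype.card K - T₁.ncard) := by
  rw [← Nat.card_eq_fintype_card, ← Set.ncard_compl,
    ← ncard_trace_mem_and_trace_mul_mem hKL hβ]
  rfl

theorem ncard_trace_mul_mem_diff (hKL : Module.finrank K L = 2) {β : L}
    (hβ : β ∉ Set.range (algebraMap K L)) (T₀ T₁ : Set K) :
    ({x : L | Algebra.trace K L (x * β) ∈ T₁} \ {x | Algebra.trace K L x ∈ T₀}).ncard =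
      (Fintype.card K - T₀.ncard) * T₁.ncard := by
  rw [← Nat.card_eq_fintype_card, ← Set.ncard_compl,
    ← ncard_trace_mem_and_trace_mul_mem hKL hβ]
  congr 1
  ext x
  exact and_comm

theorem card_filter_trace_mul_eq_zero [DecidableEq K] [DecidableEq L]
    (hKL : Module.finrank K L = 2) {δ : L} (hδ : δ ≠ 0) (hδtr : Algebra.trace K L δ = 0)
    {D : Finset L} (hD : ∀ c : K, c ≠ 0 → ∀ x ∈ D, c • x ∈ D) (hD0 : 0 ∉ D) {a : L} (ha : a ≠ 0) :
    (D.filter fun x => Algebra.trace K L (a * x) = 0).card =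
      if a⁻¹ * δ ∈ D then Fintype.card K - 1 else 0 := by
  have htr (x : L) : Algebra.trace K L (a * x) = 0 ↔ ∃ c : K, c • (a⁻¹ * δ) = x := by
    simp_rw [trace_eq_zero_iff_exists_smul hKL hδ hδtr, ← mul_smul_comm, inv_mul_eq_iff_eq_mul₀ ha]
  have hne : a⁻¹ * δ ≠ 0 := mul_ne_zero (inv_ne_zero ha) hδ
  split_ifs with hmem
  · have himage : (D.filter fun x => Algebra.trace K L (a * x) = 0) =
        (Finset.univ.erase (0 : K)).image (· • (a⁻¹ * δ)) := by
      ext x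
      simp only [Finset.mem_filter, htr, Finset.mem_image, Finset.mem_erase, Finset.mem_univ,
        and_true]
      constructor
      · rintro ⟨hx, c, rfl⟩
        exact ⟨c, fun hc => hD0 (by simpa [hc] using hx), rfl⟩
      · rintro ⟨c, hc, rfl⟩
        exact ⟨hD c hc _ hmem, c, rfl⟩
    rw [himage, Finset.card_image_of_injective _ (smul_left_injective K hne),
      Finset.card_erase_of_mem (Finset.mem_univ _), Finset.card_univ]
  · refine Finset.card_eq_zero.mpr (Finset.filter_eq_empty_iff.mpr fun x hx hx0 => hmem ?_)
    obtain ⟨c, rfl⟩ := (htr x).mp hx0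
    have hc : c ≠ 0 := fun hc => hD0 (by simpa [hc] using hx)
    simpa [inv_smul_smul₀ hc] using hD c⁻¹ (inv_ne_zero hc) _ hx

end QuadraticTrace

section AdditiveCharacter

theorem psiL_zero (p : ℕ) (F : Type) [Field F] [Fintype F] [CharP F p] : psiL p F 0 = 1 := by
  simp [psiL]

theorem isPrimitiveRoot_zetaP {p : ℕ} (hp : p ≠ 0) : IsPrimitiveRoot (zetaP p) p :=
  Complex.isPrimitiveRoot_exp p hp

/-- The function `psiL` bundled as an additive character, to make Mathlib's orthogonality
relations available. -/
def psiChar (p : ℕ) [NeZero p] (F : Type) [Field F] [Fintype F] [CharP F p] : AddChar F ℂ :=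
  letI : Algebra (ZMod p) F := ZMod.algebra F p
  (AddChar.zmodChar p (isPrimitiveRoot_zetaP (NeZero.ne p)).pow_eq_one).compAddMonoidHom
    (Algebra.trace (ZMod p) F).toAddMonoidHom

theorem psiChar_apply (p : ℕ) [NeZero p] (F : Type) [Field F] [Fintype F] [CharP F p] (x : F) :
    psiChar p F x = psiL p F x :=
  rfl

theorem psiChar_isPrimitive (p : ℕ) [Fact p.Prime] (F : Type) [Field F] [Fintype F] [CharP F p] :
    (psiChar p F).IsPrimitive := by
  let _ : Algebra (ZMod p) F := ZMod.algebra F p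
  obtain ⟨x, hx⟩ := Algebra.trace_surjective (ZMod p) F 1
  refine AddChar.IsPrimitive.of_ne_one (AddChar.ne_one_iff.mpr ⟨x, ?_⟩)
  change zetaP p ^ (Algebra.trace (ZMod p) F x).val ≠ 1
  rw [hx, ZMod.val_one, pow_one]
  exact (isPrimitiveRoot_zetaP (NeZero.ne p)).ne_one (Fact.out : p.Prime).one_lt

variable (p : ℕ) {K L : Type} [Field K] [Field L] [Fintype L] [Algebra K L] [CharP L p]

theorem sum_psiL_mul_smul_eq {D : Finset L} (hD : ∀ c : K, c ≠ 0 → ∀ x ∈ D, c • x ∈ D) (a : L)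
    {c : K} (hc : c ≠ 0) :
    ∑ x ∈ D, psiL p L (c • (a * x)) = ∑ x ∈ D, psiL p L (a * x) :=
  Finset.sum_bij' (fun x _ => c • x) (fun x _ => c⁻¹ • x) (hD c hc) (hD c⁻¹ (inv_ne_zero hc))
    (fun x _ => inv_smul_smul₀ hc x) (fun x _ => smul_inv_smul₀ hc x)
    (fun x _ => by rw [mul_smul_comm])

variable [Fintype K]

theorem psiL_eq_psiL_trace [CharP K p] (x : L) :
    psiL p L x = psiL p K (Algebra.trace K L x) := by
  have : Fact p.Prime := ⟨CharP.char_is_prime L p⟩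
  let _ : Algebra (ZMod p) L := ZMod.algebra L p
  let _ : Algebra (ZMod p) K := ZMod.algebra K p
  have : IsScalarTower (ZMod p) K L := IsScalarTower.of_algebraMap_eq' (Subsingleton.elim _ _)
  change zetaP p ^ (Algebra.trace (ZMod p) L x).val =
    zetaP p ^ (Algebra.trace (ZMod p) K (Algebra.trace K L x)).val
  rw [Algebra.trace_trace]

theorem sum_psiL_smul [DecidableEq K] (x : L) :
    ∑ c : K, psiL p L (c • x) =
      if Algebra.trace K L x = 0 then (Fintype.card K : ℂ) else 0 := by
  have : Fact p.Prime := ⟨CharP.char_is_prime L p⟩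
  have : CharP K p := ((algebraMap K L).charP_iff_charP p).mpr inferInstance
  have hpsi (c : K) : psiL p L (c • x) = psiChar p K (c * Algebra.trace K L x) := by
    rw [psiL_eq_psiL_trace p (K := K), map_smul, smul_eq_mul, psiChar_apply]
  rw [Finset.sum_congr rfl fun c _ => hpsi c,
    AddChar.sum_mulShift _ (psiChar_isPrimitive p K),
    Nat.cast_ite, Nat.cast_zero]

theorem card_sub_one_mul_sum_psiL [DecidableEq K] {D : Finset L}
    (hD : ∀ c : K, c ≠ 0 → ∀ x ∈ D, c • x ∈ D) (a : L) :
    ((Fintype.card K : ℂ) - 1) * ∑ x ∈ D, psiL p L (a * x) =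
      Fintype.card K * (D.filter fun x => Algebra.trace K L (a * x) = 0).card - D.card := by
  have hrows : ∑ x ∈ D, ∑ c : K, psiL p L (c • (a * x)) =
      Fintype.card K * (D.filter fun x => Algebra.trace K L (a * x) = 0).card := by
    simp_rw [sum_psiL_smul p, ← Finset.sum_filter, Finset.sum_const, nsmul_eq_mul, mul_comm]
  have hcols : ∑ c : K, ∑ x ∈ D, psiL p L (c • (a * x)) =
      D.card + ((Fintype.card K : ℂ) - 1) * ∑ x ∈ D, psiL p L (a * x) := by
    rw [← Finset.add_sum_erase _ _ (Finset.mem_univ 0), Finset.sum_congr rfl fun c hc =>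
      sum_psiL_mul_smul_eq p hD a (Finset.ne_of_mem_erase hc)]
    simp [psiL_zero, Finset.card_erase_of_mem, Nat.cast_sub Fintype.card_pos]
  rw [Finset.sum_comm, hcols] at hrows
  linear_combination hrows

theorem sum_psiL_mul_eq_ite [DecidableEq L]
    (hKL : Module.finrank K L = 2) {δ : L} (hδ : δ ≠ 0) (hδtr : Algebra.trace K L δ = 0)
    {D : Finset L} (hD : ∀ c : K, c ≠ 0 → ∀ x ∈ D, c • x ∈ D) (hD0 : 0 ∉ D)
    (hDcard : 2 * D.card = Fintype.card L - 1) {a : L} (ha : a ≠ 0) :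
    ∑ x ∈ D, psiL p L (a * x) =
      if a⁻¹ * δ ∈ D then ((Fintype.card K : ℂ) - 1) / 2 else -((Fintype.card K : ℂ) + 1) / 2 := by
  classical
  have hne : (Fintype.card K : ℂ) - 1 ≠ 0 :=
    sub_ne_zero.mpr (by exact_mod_cast Fintype.one_lt_card.ne')
  have hcard : (2 : ℂ) * D.card = (Fintype.card K : ℂ) ^ 2 - 1 := by
    rw [Module.card_eq_pow_finrank (K := K), hKL] at hDcard
    have := congrArg (Nat.cast : ℕ → ℂ) hDcard
    rwa [Nat.cast_sub (Nat.one_le_pow _ _ Fintype.card_pos), Nat.cast_mul, Nat.cast_pow,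
      Nat.cast_one, Nat.cast_ofNat] at this
  have hsum := card_sub_one_mul_sum_psiL p hD a
  rw [card_filter_trace_mul_eq_zero hKL hδ hδtr hD hD0 ha] at hsum
  refine mul_left_cancel₀ hne (hsum.trans ?_)
  split_ifs
  · rw [Nat.cast_sub Fintype.card_pos, Nat.cast_one]
    linear_combination -hcard / 2
  · rw [Nat.cast_zero]
    linear_combination -hcard / 2

end AdditiveCharacter

section PrimitiveElement

variable {L : Type} [Field L] [Fintype L] {ω : L}

theorem IsPrim.ne_zero (hω : IsPrim L ω) (hL : 2 < Fintype.card L) : ω ≠ 0 := by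
  classical
  rintro rfl
  have hsub : (Finset.univ : Finset L) ⊆ {0, 1} := by
    intro x _
    by_cases hx : x = 0
    · simp [hx]
    · obtain ⟨_ | n, rfl⟩ := hω x hx <;> simp
  exact hL.not_ge ((Finset.card_le_card hsub).trans Finset.card_le_two)

theorem IsPrim.isPrimitiveRoot (hω : IsPrim L ω) (hL : 2 < Fintype.card L) :
    IsPrimitiveRoot ω (Fintype.card L - 1) := by
  classical
  have hgen (x : Lˣ) : x ∈ Submonoid.powers (Units.mk0 ω (hω.ne_zero hL)) := by
    obtain ⟨n, hn⟩ := hω x x.ne_zero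
    exact ⟨n, Units.ext (by simp [hn])⟩
  have h := IsPrimitiveRoot.orderOf (Units.mk0 ω (hω.ne_zero hL))
  rw [orderOf_eq_card_of_forall_mem_powers hgen, Nat.card_eq_fintype_card,
    Fintype.card_units] at h
  exact IsPrimitiveRoot.coe_units_iff.mpr h

theorem ne_zero_of_isPrimitiveRoot_card_sub_one (hω : IsPrimitiveRoot ω (Fintype.card L - 1)) :
    ω ≠ 0 :=
  hω.ne_zero (Nat.sub_ne_zero_of_lt Fintype.one_lt_card)

theorem exists_pow_eq_of_ne_zero (hω : IsPrimitiveRoot ω (Fintype.card L - 1)) {x : L}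
    (hx : x ≠ 0) : ∃ n, ω ^ n = x := by
  have : NeZero (Fintype.card L - 1) := ⟨Nat.sub_ne_zero_of_lt Fintype.one_lt_card⟩
  obtain ⟨n, -, hn⟩ := hω.eq_pow_of_pow_eq_one (FiniteField.pow_card_sub_one_eq_one x hx)
  exact ⟨n, hn⟩

theorem pow_eq_pow_iff_modEq_card_sub_one (hω : IsPrimitiveRoot ω (Fintype.card L - 1))
    {a b : ℕ} : ω ^ a = ω ^ b ↔ a ≡ b [MOD Fintype.card L - 1] := by
  have hord := (IsPrimitiveRoot.coe_units_iff
    (ζ := Units.mk0 ω (ne_zero_of_isPrimitiveRoot_card_sub_one hω))).mp hω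
  rw [hord.eq_orderOf, ← pow_eq_pow_iff_modEq, Units.ext_iff]
  simp

variable {K : Type} [Field K] [Fintype K] [Algebra K L]

theorem card_sub_one_eq_of_finrank_eq_two (hKL : Module.finrank K L = 2) :
    Fintype.card L - 1 = (Fintype.card K + 1) * (Fintype.card K - 1) := by
  rw [Module.card_eq_pow_finrank (K := K), hKL, ← Nat.sq_sub_sq, one_pow]

theorem card_add_one_dvd_of_pow_eq_algebraMap (hω : IsPrimitiveRoot ω (Fintype.card L - 1))
    (hKL : Module.finrank K L = 2) {n : ℕ} {c : K} (h : ω ^ n = algebraMap K L c) :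
    Fintype.card K + 1 ∣ n := by
  have hc : c ≠ 0 := by
    rintro rfl
    exact pow_ne_zero n (ne_zero_of_isPrimitiveRoot_card_sub_one hω) (h.trans (map_zero _))
  have hpow : ω ^ (n * (Fintype.card K - 1)) = 1 := by
    rw [pow_mul, h, ← map_pow, FiniteField.pow_card_sub_one_eq_one c hc, map_one]
  have hdvd := (hω.pow_eq_one_iff_dvd _).mp hpow
  rw [card_sub_one_eq_of_finrank_eq_two hKL] at hdvd
  exact Nat.dvd_of_mul_dvd_mul_right (Nat.sub_pos_of_lt Fintype.one_lt_card) hdvd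

theorem trace_pow_half_card_add_one_eq_zero (hω : IsPrimitiveRoot ω (Fintype.card L - 1))
    (hKL : Module.finrank K L = 2) (hK : Odd (Fintype.card K)) :
    Algebra.trace K L (ω ^ ((Fintype.card K + 1) / 2)) = 0 := by
  have hhalf : Fintype.card L - 1 = (Fintype.card K + 1) / 2 * (Fintype.card K - 1) * 2 := by
    rw [card_sub_one_eq_of_finrank_eq_two hKL, mul_right_comm,
      Nat.div_mul_cancel hK.add_one.two_dvd]
  refine trace_eq_zero_of_pow_card_sub_one_eq_neg_one hKL ?_
  rw [← pow_mul]
  exact (hω.pow (Nat.sub_pos_of_lt Fintype.one_lt_card) hhalf).eq_neg_one_of_two_right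

end PrimitiveElement

section HalfSystem

/-- The condition on the index set `K` of the paper: an `m`-subset of `{0, …, 2m - 1}` that is
disjoint from its translate by `m` modulo `2m`. -/
structure IsHalfSystem (m : ℕ) (I : Finset ℕ) : Prop where
  lt : ∀ k ∈ I, k < 2 * m
  card_eq : I.card = m
  add_mod_notMem : ∀ k ∈ I, (k + m) % (2 * m) ∉ I

variable {m : ℕ} {I : Finset ℕ}

theorem IsHalfSystem.image_add_mod_eq (hI : IsHalfSystem m I) :
    I.image (fun k => (k + m) % (2 * m)) = Finset.range (2 * m) \ I := by
  refine Finset.eq_of_subset_of_card_le (Finset.image_subset_iff.mpr fun k hk => ?_) ?_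
  · have hpos : 0 < 2 * m := k.zero_le.trans_lt (hI.lt k hk)
    exact Finset.mem_sdiff.mpr
      ⟨Finset.mem_range.mpr (Nat.mod_lt _ hpos), hI.add_mod_notMem k hk⟩
  · have hinj : Set.InjOn (fun k => (k + m) % (2 * m)) I := fun x hx y hy hxy =>
      (Nat.ModEq.add_right_cancel' m hxy).eq_of_lt_of_lt (hI.lt x hx) (hI.lt y hy)
    rw [Finset.card_image_of_injOn hinj,
      Finset.card_sdiff_of_subset fun k hk => Finset.mem_range.mpr (hI.lt k hk),
      Finset.card_range, hI.card_eq]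
    lia

theorem IsHalfSystem.exists_modEq_add_iff (hI : IsHalfSystem m I) (hm : 0 < m) (n : ℕ) :
    (∃ i ∈ I, n ≡ i + m [MOD 2 * m]) ↔ ¬∃ i ∈ I, n ≡ i [MOD 2 * m] := by
  have hlt : n % (2 * m) < 2 * m := Nat.mod_lt _ (by lia)
  have hleft : (∃ i ∈ I, n ≡ i + m [MOD 2 * m]) ↔
      n % (2 * m) ∈ I.image fun k => (k + m) % (2 * m) := by
    simp only [Nat.ModEq, Finset.mem_image, eq_comm]
  have hright : (∃ i ∈ I, n ≡ i [MOD 2 * m]) ↔ n % (2 * m) ∈ I := by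
    refine ⟨fun ⟨i, hi, h⟩ => ?_, fun h => ⟨_, h, (Nat.mod_modEq n _).symm⟩⟩
    rwa [h, Nat.mod_eq_of_lt (hI.lt i hi)]
  simp [hleft, hright, hI.image_add_mod_eq, hlt]

end HalfSystem

section CyclotomicUnion

variable {L : Type} [Field L]

/-- The union `⋃_{i ∈ I} C_{i+j}^{(N)}` of cyclotomic classes. With `N = 2m` and `I` the index set
of the paper, `D₀` and `D₁` are the cases `j = 0` and `j = m`. -/
def cycUnion (L : Type) [Field L] (ω : L) (N : ℕ) (I : Finset ℕ) (j : ℕ) : Set L :=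
  ⋃ i ∈ I, cyc L ω N (i + j)

variable {ω : L} {N : ℕ} {I : Finset ℕ}

theorem zero_notMem_cycUnion (hω : ω ≠ 0) (j : ℕ) : (0 : L) ∉ cycUnion L ω N I j := by
  simp only [cycUnion, Set.mem_iUnion, not_exists]
  rintro i - ⟨k, hk⟩
  exact mul_ne_zero (pow_ne_zero _ hω) (pow_ne_zero _ (pow_ne_zero _ hω)) hk.symm

theorem image_pow_mul_cycUnion (ω : L) (N : ℕ) (I : Finset ℕ) (j k : ℕ) :
    (ω ^ k * ·) '' cycUnion L ω N I j = cycUnion L ω N I (j + k) := by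
  have hcyc (i : ℕ) : (ω ^ k * ·) '' cyc L ω N (i + j) = cyc L ω N (i + (j + k)) := by
    ext x
    constructor
    · rintro ⟨_, ⟨n, rfl⟩, rfl⟩
      exact ⟨n, by ring⟩
    · rintro ⟨n, rfl⟩
      exact ⟨_, ⟨n, rfl⟩, by ring⟩
  simp only [cycUnion, Set.image_iUnion, hcyc]

variable [Fintype L]

theorem pow_mem_cyc_iff (hω : IsPrimitiveRoot ω (Fintype.card L - 1))
    (hN : N ∣ Fintype.card L - 1) {n i : ℕ} : ω ^ n ∈ cyc L ω N i ↔ n ≡ i [MOD N] := by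
  have hpow (k : ℕ) : ω ^ n = ω ^ i * (ω ^ N) ^ k ↔ n ≡ i + N * k [MOD Fintype.card L - 1] := by
    rw [← pow_mul, ← pow_add, pow_eq_pow_iff_modEq_card_sub_one hω]
  constructor
  · rintro ⟨k, hk⟩
    exact (((hpow k).mp hk).of_dvd hN).trans (by simp [Nat.ModEq])
  · intro h
    -- Adding a multiple of the order of `ω` to `n` makes the exponent at least `i`.
    have hi : i ≤ n + i * (Fintype.card L - 1) :=
      le_add_left (Nat.le_mul_of_pos_right i (Nat.sub_pos_of_lt Fintype.one_lt_card))
    have hmod : i ≡ n + i * (Fintype.card L - 1) [MOD N] :=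
      h.symm.trans (Nat.ModEq.symm (by simpa using
        (Nat.modEq_zero_iff_dvd.mpr (hN.mul_left i)).add_left n))
    obtain ⟨k, hk⟩ := (Nat.modEq_iff_dvd' hi).mp hmod
    refine ⟨k, (hpow k).mpr ?_⟩
    rw [← hk, Nat.add_sub_cancel' hi]
    simp [Nat.ModEq]

theorem pow_mem_cycUnion_iff (hω : IsPrimitiveRoot ω (Fintype.card L - 1))
    (hN : N ∣ Fintype.card L - 1) {n j : ℕ} :
    ω ^ n ∈ cycUnion L ω N I j ↔ ∃ i ∈ I, n ≡ i + j [MOD N] := by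
  simp only [cycUnion, Set.mem_iUnion, pow_mem_cyc_iff hω hN, exists_prop]

theorem smul_mem_cycUnion {K : Type} [Field K] [Fintype K] [Algebra K L]
    (hω : IsPrimitiveRoot ω (Fintype.card L - 1)) (hKL : Module.finrank K L = 2)
    (hN : N ∣ Fintype.card K + 1) {j : ℕ} {c : K} (hc : c ≠ 0) {x : L}
    (hx : x ∈ cycUnion L ω N I j) : c • x ∈ cycUnion L ω N I j := by
  have hNL : N ∣ Fintype.card L - 1 :=
    card_sub_one_eq_of_finrank_eq_two hKL ▸ hN.mul_right _
  have hx0 : x ≠ 0 := fun h =>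
    zero_notMem_cycUnion (ne_zero_of_isPrimitiveRoot_card_sub_one hω) j (h ▸ hx)
  obtain ⟨n, rfl⟩ := exists_pow_eq_of_ne_zero hω hx0
  obtain ⟨k, hk⟩ := exists_pow_eq_of_ne_zero hω ((map_ne_zero (algebraMap K L)).mpr hc)
  obtain ⟨i, hi, hni⟩ := (pow_mem_cycUnion_iff hω hNL).mp hx
  have hk0 := Nat.modEq_zero_iff_dvd.mpr
    (hN.trans (card_add_one_dvd_of_pow_eq_algebraMap hω hKL hk))
  rw [Algebra.smul_def, ← hk, ← pow_add, pow_mem_cycUnion_iff hω hNL]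
  exact ⟨i, hi, by simpa using hk0.add hni⟩

variable {m : ℕ}

theorem mem_cycUnion_half_iff (hω : IsPrimitiveRoot ω (Fintype.card L - 1)) (hm : 0 < m)
    (hmL : 2 * m ∣ Fintype.card L - 1) (hI : IsHalfSystem m I) {x : L} (hx : x ≠ 0) :
    x ∈ cycUnion L ω (2 * m) I m ↔ x ∉ cycUnion L ω (2 * m) I 0 := by
  obtain ⟨n, rfl⟩ := exists_pow_eq_of_ne_zero hω hx
  simp only [pow_mem_cycUnion_iff hω hmL, hI.exists_modEq_add_iff hm, add_zero]

theorem two_mul_ncard_cycUnion (hω : IsPrimitiveRoot ω (Fintype.card L - 1)) (hm : 0 < m)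
    (hmL : 2 * m ∣ Fintype.card L - 1) (hI : IsHalfSystem m I) (j : ℕ) :
    2 * (cycUnion L ω (2 * m) I j).ncard = Fintype.card L - 1 := by
  have hω0 := ne_zero_of_isPrimitiveRoot_card_sub_one hω
  have hshift (k : ℕ) :
      (cycUnion L ω (2 * m) I k).ncard = (cycUnion L ω (2 * m) I 0).ncard := by
    rw [← zero_add k, ← image_pow_mul_cycUnion,
      Set.ncard_image_of_injective _ (mul_right_injective₀ (pow_ne_zero k hω0))]
  have hcompl : ({0}ᶜ : Set L) \ cycUnion L ω (2 * m) I 0 = cycUnion L ω (2 * m) I m := by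
    ext x
    refine ⟨fun ⟨hx, hx0⟩ => (mem_cycUnion_half_iff hω hm hmL hI hx).mpr hx0, fun hx => ?_⟩
    have hne : x ≠ 0 := fun h => zero_notMem_cycUnion hω0 m (h ▸ hx)
    exact ⟨hne, (mem_cycUnion_half_iff hω hm hmL hI hne).mp hx⟩
  have hsub : cycUnion L ω (2 * m) I 0 ⊆ {0}ᶜ := fun x hx h =>
    zero_notMem_cycUnion hω0 0 (Set.mem_singleton_iff.mp h ▸ hx)
  have hcard := Set.ncard_sdiff_add_ncard_of_subset hsub
  rw [hcompl, hshift m, Set.ncard_compl, Set.ncard_singleton, Nat.card_eq_fintype_card] at hcard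
  rw [hshift j, two_mul, hcard]

theorem mul_pow_mem_cycUnion_half_iff (hω : IsPrimitiveRoot ω (Fintype.card L - 1))
    (hmL : 2 * m ∣ Fintype.card L - 1) (v : ℕ) {x : L} (hx : x ≠ 0) :
    x * ω ^ (m * v) ∈ cycUnion L ω (2 * m) I m ↔
      x ∈ cycUnion L ω (2 * m) I (if Even v then m else 0) := by
  obtain ⟨n, rfl⟩ := exists_pow_eq_of_ne_zero hω hx
  rw [← pow_add, pow_mem_cycUnion_iff hω hmL, pow_mem_cycUnion_iff hω hmL]
  refine exists_congr fun i => and_congr_right fun _ => ?_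
  split_ifs with hv
  · obtain ⟨w, rfl⟩ := hv
    have h : n + m * (w + w) ≡ n [MOD 2 * m] := by
      rw [show n + m * (w + w) = n + 2 * m * w by ring]
      simp [Nat.ModEq]
    exact ⟨h.symm.trans, h.trans⟩
  · obtain ⟨w, rfl⟩ := Nat.not_even_iff_odd.mp hv
    have h : n + m * (2 * w + 1) ≡ n + m [MOD 2 * m] := by
      rw [show n + m * (2 * w + 1) = n + m + 2 * m * w by ring]
      simp [Nat.ModEq]
    exact ⟨fun h' => (h.symm.trans h').add_right_cancel' m, fun h' => h.trans (h'.add_right m)⟩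

end CyclotomicUnion

section Parity

theorem odd_of_two_mul_dvd_add_one {x m : ℕ} (h : 2 * m ∣ x + 1) : Odd x := by
  have : 2 ∣ x + 1 := dvd_of_mul_right_dvd h
  grind

theorem sq_modEq_one_of_odd {x : ℕ} (hx : Odd x) : x ^ 2 ≡ 1 [MOD 2 * (x + 1)] := by
  obtain ⟨r, rfl⟩ := hx
  have h : (2 * r + 1) ^ 2 = 1 + 2 * (2 * r + 1 + 1) * r := by ring
  rw [h]
  simp [Nat.ModEq]

theorem even_div_and_odd_iff_even_pow_div {x m t : ℕ} (hx : 2 * m ∣ x + 1)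
    (hxt : 2 * m ∣ x ^ t + 1) :
    Even ((x + 1) / (2 * m)) ∧ Odd t ↔ Even ((x ^ t + 1) / (2 * m)) := by
  have hm : 0 < 2 * m := Nat.pos_of_dvd_of_pos hx x.succ_pos
  have hodd : Odd x := odd_of_two_mul_dvd_add_one hx
  have hpow (j : ℕ) : x ^ (2 * j) ≡ 1 [MOD 2 * (x + 1)] := by
    simpa [pow_mul] using (sq_modEq_one_of_odd hodd).pow j
  obtain ⟨u, hu⟩ := hx
  obtain ⟨v, hv⟩ := hxt
  rw [hu, hv, Nat.mul_div_cancel_left _ hm, Nat.mul_div_cancel_left _ hm]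
  obtain ⟨j, rfl | rfl⟩ := Nat.even_or_odd' t
  · have hmod : 2 * m * v ≡ 2 [MOD 4] := by
      rw [← hv]
      exact ((hpow j).add_right 1).of_dvd (mul_dvd_mul_left 2 hodd.add_one.two_dvd)
    have hv_odd : ¬Even v := by
      rintro ⟨w, rfl⟩
      rw [show 2 * m * (w + w) = 4 * (m * w) by ring] at hmod
      simp [Nat.ModEq] at hmod
    simp [hv_odd]
  · have hmod : 2 * m * v ≡ 2 * m * u [MOD 2 * m * (2 * u)] := by
      rw [← hv, ← hu, show 2 * m * (2 * u) = 2 * (x + 1) by rw [hu]; ring]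
      simpa [pow_succ] using ((hpow j).mul_right x).add_right 1
    have huv : v ≡ u [MOD 2] :=
      (Nat.ModEq.mul_left_cancel' hm.ne' hmod).of_dvd (dvd_mul_right 2 u)
    simpa [Nat.even_iff] using by rw [huv]

end Parity

section SlopeSet

/-- The set `{(x, xy) : x ∈ D, y ∈ A}` of pairs with first coordinate in `D` and slope in `A`,
from which `E₁` is built. -/
def slopeSet {L : Type*} [Mul L] (D A : Set L) : Set (L × L) :=
  {w | ∃ x ∈ D, ∃ y ∈ A, w = (x, x * y)}

theorem disjoint_slopeSet {L : Type*} [Mul L] {D D' : Set L} (hD : Disjoint D D') (A A' : Set L) :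
    Disjoint (slopeSet D A) (slopeSet D' A') := by
  rw [Set.disjoint_left]
  rintro _ ⟨x, hx, y, -, rfl⟩ ⟨x', hx', y', -, h⟩
  obtain rfl : x = x' := congrArg Prod.fst h
  exact Set.disjoint_left.mp hD hx hx'

variable (p : ℕ) {L : Type} [Field L] [Fintype L] [CharP L p]

theorem psiSum_union (a b : L) {E E' : Set (L × L)} (h : Disjoint E E') :
    psiSum p L a b (E ∪ E') = psiSum p L a b E + psiSum p L a b E' :=
  finsum_mem_union h (Set.toFinite _) (Set.toFinite _)

theorem psiSum_slopeSet (a : L) {D : Finset L} (hD : 0 ∉ D) (A : Set L) :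
    psiSum p L a 0 (slopeSet D A) = A.ncard * ∑ x ∈ D, psiL p L (a * x) := by
  classical
  have himage : slopeSet (D : Set L) A =
      (fun z : L × L => (z.1, z.1 * z.2)) '' (D ×ˢ A.toFinset : Finset (L × L)) := by
    ext w
    simp [slopeSet, and_assoc, eq_comm]
  have hinj : Set.InjOn (fun z : L × L => (z.1, z.1 * z.2)) (D ×ˢ A.toFinset : Finset (L × L)) := by
    rintro ⟨x, y⟩ hxy ⟨x', y'⟩ - h
    obtain ⟨rfl, h⟩ : x = x' ∧ x * y = x' * y' := Prod.mk.inj h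
    have hx : x ≠ 0 := fun hx => hD (hx ▸ (Finset.mem_product.mp hxy).1)
    rw [mul_left_cancel₀ hx h]
  rw [psiSum, himage, finsum_mem_image hinj, finsum_mem_coe_finset, Finset.sum_product]
  simp [Set.ncard_eq_toFinset_card', Finset.mul_sum]

end SlopeSet

section CharacterSum

variable {p m : ℕ} {K L : Type} [Field K] [Fintype K] [Field L] [Fintype L] [Algebra K L]
  {ω : L} {I : Finset ℕ}

theorem finrank_eq_two_of_card_eq_sq (hKL : Fintype.card L = Fintype.card K ^ 2) :
    Module.finrank K L = 2 :=
  Nat.pow_right_injective Fintype.one_lt_card (Module.card_eq_pow_finrank.symm.trans hKL)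

theorem pow_notMem_range_algebraMap (hKL : Module.finrank K L = 2)
    (hω : IsPrimitiveRoot ω (Fintype.card L - 1)) (hm : 0 < m)
    (hmK : 2 * m ∣ Fintype.card K + 1) : ω ^ m ∉ Set.range (algebraMap K L) := by
  rintro ⟨c, hc⟩
  have hle := Nat.le_of_dvd hm (card_add_one_dvd_of_pow_eq_algebraMap hω hKL hc.symm)
  have hle' := Nat.le_of_dvd (Nat.succ_pos _) hmK
  lia

variable [CharP L p]

theorem sum_psiL_cycUnion [DecidableEq L] (hKL : Module.finrank K L = 2)
    (hω : IsPrimitiveRoot ω (Fintype.card L - 1)) (hm : 0 < m)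
    (hmK : 2 * m ∣ Fintype.card K + 1) (hI : IsHalfSystem m I) {j : ℕ} {D : Finset L}
    (hD : (D : Set L) = cycUnion L ω (2 * m) I j) {a : L} (ha : a ≠ 0) :
    ∑ x ∈ D, psiL p L (a * x) = if a⁻¹ * ω ^ ((Fintype.card K + 1) / 2) ∈ D
      then ((Fintype.card K : ℂ) - 1) / 2 else -((Fintype.card K : ℂ) + 1) / 2 := by
  have hω0 := ne_zero_of_isPrimitiveRoot_card_sub_one hω
  have hmL : 2 * m ∣ Fintype.card L - 1 :=
    card_sub_one_eq_of_finrank_eq_two hKL ▸ hmK.mul_right _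
  have hmem (x : L) : x ∈ D ↔ x ∈ cycUnion L ω (2 * m) I j := by rw [← hD, Finset.mem_coe]
  refine sum_psiL_mul_eq_ite p hKL (pow_ne_zero _ hω0)
    (trace_pow_half_card_add_one_eq_zero hω hKL (odd_of_two_mul_dvd_add_one hmK))
    (fun c hc x hx => ?_) ?_ ?_ ha
  · exact (hmem _).mpr (smul_mem_cycUnion hω hKL hmK hc ((hmem x).mp hx))
  · exact fun h => zero_notMem_cycUnion hω0 j ((hmem 0).mp h)
  · rw [← Set.ncard_coe_finset, hD, two_mul_ncard_cycUnion hω hm hmL hI]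

theorem psiSum_slopeSet_union_eq_ite (hKL : Module.finrank K L = 2)
    (hω : IsPrimitiveRoot ω (Fintype.card L - 1)) (hm : 0 < m)
    (hmK : 2 * m ∣ Fintype.card K + 1) (hI : IsHalfSystem m I) (A₀ A₁ : Set L) {a : L}
    (ha : a ≠ 0) [Decidable (a⁻¹ * ω ^ ((Fintype.card K + 1) / 2) ∈ cycUnion L ω (2 * m) I m)] :
    psiSum p L a 0 (slopeSet (cycUnion L ω (2 * m) I 0) A₀ ∪
        slopeSet (cycUnion L ω (2 * m) I m) A₁) =
      if a⁻¹ * ω ^ ((Fintype.card K + 1) / 2) ∈ cycUnion L ω (2 * m) I m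
      then A₁.ncard * (((Fintype.card K : ℂ) - 1) / 2) - A₀.ncard * (((Fintype.card K : ℂ) + 1) / 2)
      else A₀.ncard * (((Fintype.card K : ℂ) - 1) / 2) -
        A₁.ncard * (((Fintype.card K : ℂ) + 1) / 2) := by
  classical
  have hω0 := ne_zero_of_isPrimitiveRoot_card_sub_one hω
  have hmL : 2 * m ∣ Fintype.card L - 1 :=
    card_sub_one_eq_of_finrank_eq_two hKL ▸ hmK.mul_right _
  have hcompl {x : L} (hx : x ≠ 0) := mem_cycUnion_half_iff hω hm hmL hI hx
  have hzero (j : ℕ) := zero_notMem_cycUnion (N := 2 * m) (I := I) hω0 j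
  obtain ⟨D₀, hD₀⟩ := (Set.toFinite (cycUnion L ω (2 * m) I 0)).exists_finset_coe
  obtain ⟨D₁, hD₁⟩ := (Set.toFinite (cycUnion L ω (2 * m) I m)).exists_finset_coe
  have hdisj : Disjoint (D₀ : Set L) D₁ := by
    rw [hD₀, hD₁, Set.disjoint_left]
    exact fun x hx₀ hx₁ => (hcompl fun h => hzero 0 (h ▸ hx₀)).mp hx₁ hx₀
  have hiff : a⁻¹ * ω ^ ((Fintype.card K + 1) / 2) ∈ D₁ ↔
      a⁻¹ * ω ^ ((Fintype.card K + 1) / 2) ∉ D₀ := by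
    rw [← Finset.mem_coe, ← Finset.mem_coe, hD₀, hD₁]
    exact hcompl (mul_ne_zero (inv_ne_zero ha) (pow_ne_zero _ hω0))
  have h₀ : 0 ∉ D₀ := by rw [← Finset.mem_coe, hD₀]; exact hzero 0
  have h₁ : 0 ∉ D₁ := by rw [← Finset.mem_coe, hD₁]; exact hzero m
  simp only [← hD₀, ← hD₁, Finset.mem_coe, hiff]
  rw [psiSum_union p a 0 (disjoint_slopeSet hdisj A₀ A₁), psiSum_slopeSet p a h₀,
    psiSum_slopeSet p a h₁, sum_psiL_cycUnion hKL hω hm hmK hI hD₀ ha,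
    sum_psiL_cycUnion hKL hω hm hmK hI hD₁ ha]
  simp only [hiff, ite_not]
  split_ifs <;> ring

variable {T₀ T₁ : Set K}

open Classical in
theorem psiSum_E1_eq_ite (hKL : Module.finrank K L = 2)
    (hω : IsPrimitiveRoot ω (Fintype.card L - 1))
    (hmK : 2 * m ∣ Fintype.card K + 1) (hI : IsHalfSystem m I)
    (hT₀ : T₀.ncard = (Fintype.card K - 1) / 2) (hT₁ : T₁.ncard = (Fintype.card K + 1) / 2) {a : L}
    (ha : a ≠ 0) :
    psiSum p L a 0
        (slopeSet (cycUnion L ω (2 * m) I 0)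
          ({x | Algebra.trace K L x ∈ T₀} \ {x | Algebra.trace K L (x * ω ^ m) ∈ T₁}) ∪
        slopeSet (cycUnion L ω (2 * m) I m)
          ({x | Algebra.trace K L (x * ω ^ m) ∈ T₁} \ {x | Algebra.trace K L x ∈ T₀})) =
      if a⁻¹ ∈ cycUnion L ω (2 * m) I (if Even ((Fintype.card K + 1) / (2 * m)) then m else 0)
      then ((Fintype.card K : ℂ) ^ 2 - 1) / 4 else (-3 * (Fintype.card K : ℂ) ^ 2 - 1) / 4 := by
  have hm : 0 < m := Nat.pos_of_mul_pos_left (Nat.pos_of_dvd_of_pos hmK (Nat.succ_pos _))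
  have hβ := pow_notMem_range_algebraMap hKL hω hm hmK
  have hmL : 2 * m ∣ Fintype.card L - 1 :=
    card_sub_one_eq_of_finrank_eq_two hKL ▸ hmK.mul_right _
  have hhalf : (Fintype.card K + 1) / 2 = m * ((Fintype.card K + 1) / (2 * m)) := by
    obtain ⟨v, hv⟩ := hmK
    rw [hv, Nat.mul_div_cancel_left _ (by lia), mul_assoc, Nat.mul_div_cancel_left _ two_pos]
  obtain ⟨r, hr⟩ := odd_of_two_mul_dvd_add_one hmK
  have hT₀r : T₀.ncard = r := by lia
  have hT₁r : T₁.ncard = r + 1 := by lia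
  have hc₀ : Fintype.card K - r = r + 1 := by lia
  have hc₁ : Fintype.card K - (r + 1) = r := by lia
  rw [psiSum_slopeSet_union_eq_ite hKL hω hm hmK hI _ _ ha, ncard_trace_mem_diff hKL hβ,
    ncard_trace_mul_mem_diff hKL hβ, hT₀r, hT₁r, hc₀, hc₁]
  simp only [hhalf, mul_pow_mem_cycUnion_half_iff hω hmL _ (inv_ne_zero ha)]
  split_ifs <;> push_cast [hr] <;> ring

theorem semiprimitive_E1_char_b_zero_general {l t : ℕ} (hK : Fintype.card K = p ^ (l * t))
    (hKL : Module.finrank K L = 2) (hω : IsPrim L ω)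
    (hmK : 2 * m ∣ Fintype.card K + 1) (hml : 2 * m ∣ p ^ l + 1) (hI : IsHalfSystem m I)
    (hT₀ : T₀.ncard = (Fintype.card K - 1) / 2) (hT₁ : T₁.ncard = (Fintype.card K + 1) / 2) {a : L}
    (ha : a ≠ 0) :
    let E₁ := slopeSet (cycUnion L ω (2 * m) I 0)
        ({x | Algebra.trace K L x ∈ T₀} \ {x | Algebra.trace K L (x * ω ^ m) ∈ T₁}) ∪
      slopeSet (cycUnion L ω (2 * m) I m)
        ({x | Algebra.trace K L (x * ω ^ m) ∈ T₁} \ {x | Algebra.trace K L x ∈ T₀})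
    let Dε := cycUnion L ω (2 * m) I (if Even ((p ^ l + 1) / (2 * m)) ∧ Odd t then m else 0)
    (a⁻¹ ∈ Dε → psiSum p L a 0 E₁ = ((Fintype.card K : ℂ) ^ 2 - 1) / 4) ∧
      (a⁻¹ ∉ Dε → psiSum p L a 0 E₁ = (-3 * (Fintype.card K : ℂ) ^ 2 - 1) / 4) := by
  intro E₁ Dε
  have hcard : 2 < Fintype.card L := by
    rw [Module.card_eq_pow_finrank (K := K), hKL]
    nlinarith [Fintype.one_lt_card (α := K)]
  have hparity : Even ((p ^ l + 1) / (2 * m)) ∧ Odd t ↔ Even ((Fintype.card K + 1) / (2 * m)) := by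
    rw [hK, pow_mul] at hmK ⊢
    exact even_div_and_odd_iff_even_pow_div hml hmK
  have hval := psiSum_E1_eq_ite (p := p) hKL (hω.isPrimitiveRoot hcard) hmK hI hT₀ hT₁ ha
  simp only [Dε, hparity]
  exact ⟨fun h => hval.trans (if_pos h), fun h => hval.trans (if_neg h)⟩

end CharacterSum

/-- Lemma 3.4: for `b = 0`, `a ≠ 0`, `ψ_{a,0}(E₁)` is `(q²−1)/4` if
`a⁻¹ ∈ D_ε` and `(−3q²−1)/4` otherwise. -/
theorem semiprimitive_E1_char_b_zero
    (p s q m l t : ℕ) (hp : p.Prime) (hpodd : p ≠ 2) (hs : 0 < s) (hq : q = p ^ s)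
    (hm : 0 < m) (hdvd : 2 * m ∣ q + 1)
    (hl : 0 < l) (hldvd : 2 * m ∣ p ^ l + 1)
    (hlmin : ∀ l', 0 < l' → 2 * m ∣ p ^ l' + 1 → l ≤ l')
    (ht : s = l * t)
    (K L : Type) [Field K] [Fintype K] [Field L] [Fintype L] [Algebra K L] [CharP L p]
    (hK : Fintype.card K = q) (hL : Fintype.card L = q ^ 2)
    (ω : L) (hω : IsPrim L ω)
    (Kst : Finset ℕ) (hKsub : ∀ k ∈ Kst, k < 2 * m) (hKcard : Kst.card = m)
    (hKdisj : ∀ k ∈ Kst, (k + m) % (2 * m) ∉ Kst)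
    (D₀ D₁ : Set L)
    (hD₀ : D₀ = ⋃ i ∈ Kst, cyc L ω (2 * m) i)
    (hD₁ : D₁ = ⋃ i ∈ Kst, cyc L ω (2 * m) (i + m))
    (T₀ T₁ : Set K)
    (S₀ S₁ : Set L)
    (hS₀ : S₀ = {x : L | Algebra.trace K L x ∈ T₀})
    (hS₁ : S₁ = {x : L | Algebra.trace K L (x * ω ^ m) ∈ T₁})
    (ε : ℕ) (hε : ε = if Even ((p ^ l + 1) / (2 * m)) ∧ Odd t then 1 else 0)
    (Dε : Set L) (hDε : Dε = if ε = 0 then D₀ else D₁)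
    (A₀ A₁ : Set L) (hA₀ : A₀ = S₀ \ S₁) (hA₁ : A₁ = S₁ \ S₀)
    (hT₀ : T₀.ncard = (q - 1) / 2) (hT₁ : T₁.ncard = (q + 1) / 2)
    (E₁ : Set (L × L))
    (hE₁ : E₁ = {w | ∃ x ∈ D₀, ∃ y ∈ A₀, w = (x, x * y)} ∪
      {w | ∃ x ∈ D₁, ∃ y ∈ A₁, w = (x, x * y)})
    : ∀ a : L, a ≠ 0 →
      (a⁻¹ ∈ Dε → psiSum p L a 0 E₁ = ((q : ℂ) ^ 2 - 1) / 4) ∧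
      (a⁻¹ ∉ Dε → psiSum p L a 0 E₁ = (-3 * (q : ℂ) ^ 2 - 1) / 4) := by
  intro a ha
  subst hK hS₀ hS₁ hA₀ hA₁ ht hD₀ hD₁ hE₁ hε hDε
  have hval := semiprimitive_E1_char_b_zero_general hq (finrank_eq_two_of_card_eq_sq hL) hω hdvd
    hldvd ⟨hKsub, hKcard, hKdisj⟩ hT₀ hT₁ ha
  by_cases hP : Even ((p ^ l + 1) / (2 * m)) ∧ Odd t <;>
    simp only [hP, ↓reduceIte] at hval ⊢ <;> exact hval

end
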